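/- arXiv:1708.08034 — 2 statements merged into one kernel-verified Lean document; each statement's English description precedes it below -/
import Mathlib

section
/- Let M be an associative ℂ-algebra, E : M → ℂ a linear functional, and let W_n : M^n → Γ(M) be the multilinear maps determined by W() = 1 and the recursion W(a₁,…,a_{n+1}) = W(a₁,…,a_n)·X(a_{n+1}) − Σ_{i=1}^n E(a_i a_{n+1})·W(a₁,…,â_i,…,a_n). Fix s(1),…,s(k) ≥ 1 with n = s(1)+…+s(k), and let J₁,…,J_k be the consecutive intervals of {1,…,n} of lengths s(1),…,s(k). Then for all a₁,…,a_n ∈ M: Π_{r=1}^k W(a_i : i ∈ J_r, in increasing order) = Σ_π (Π_{{i<j} ∈ Pair(π)} E(a_i a_j)) · W(a_{v₁},…,a_{v_m}), where the sum is over all π ∈ P_{1,2}(n) such that no two-element block of π is contained in a single interval J_r, and {v₁},…,{v_m} are the singleton blocks of π with v₁ < … < v_m. -/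
/-!
For an arbitrary predicate `A` on blocks and a finite set `S` of indices, let
`G A S = ∑ E_m • W(S ∖ ⋃ m)`, the sum being over all matchings `m` of `S` (sets of pairwise disjoint
two-element subsets of `S`) whose pairs all satisfy `A`. If `x` exceeds every element of `S`, then
sorting the matchings of `S ∪ {x}` by the partner of `x`, and expanding `W(…, x)` with the
recursion, gives (`G_insert`)

`G A (S ∪ {x}) = G A S * X(a_x) - ∑_{j ∈ S, ¬ A {j,x}} E(a_j a_x) • G A (S ∖ {j})`.

This is the recursion of `W` restricted to the inadmissible partners of `x`. Hence, if `V` lies to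
the right of `T`, all pairs inside `V` are inadmissible and all pairs between `T` and `V` are
admissible, then `G A (T ∪ V) = G A T * W(V)`, by induction on `V` (`G_union`). Taking `A B` to mean
that `B` lies in no interval `J_r` and adjoining the intervals one at a time shows that the product of
the `W(J_r)` is `G A` of the whole index set. Finally, partitions into blocks of size one and two
correspond to matchings by forgetting the singletons (`sum_partitions`).
-/

open Finset
open scoped Classical

noncomputable section

/-- A partition of `Fin n`, given by its (finite) set of blocks. -/
def IsPartition {n : ℕ} (P : Finset (Finset (Fin n))) : Prop :=
  (∀ B ∈ P, B.Nonempty) ∧ ∀ i : Fin n, ∃! B : Finset (Fin n), B ∈ P ∧ i ∈ B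

/-- For `U = {i₁ < … < iₘ}`, the ordered product `a_{i₁} ⋯ a_{iₘ}`. -/
def aProd {M : Type*} [Ring M] {n : ℕ} (a : Fin n → M) (B : Finset (Fin n)) : M :=
  ((B.sort (· ≤ ·)).map a).prod

/-- The elements of `Fin n` forming singleton blocks of `P`, in increasing order. -/
def singL {n : ℕ} (P : Finset (Finset (Fin n))) : List (Fin n) :=
  (Finset.univ.filter fun i : Fin n => ({i} : Finset (Fin n)) ∈ P).sort (· ≤ ·)

/-- The number of elements of `{1,…,n}` preceding the `r`-th consecutive interval of
lengths `s 0, s 1, …`. -/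
def offset {k : ℕ} (s : Fin k → ℕ) (r : Fin k) : ℕ :=
  ∑ i ∈ Finset.univ.filter (fun i => i < r), s i

lemma offset_add_lt {k : ℕ} (s : Fin k → ℕ) (r : Fin k) (j : ℕ) (hj : j < s r) :
    offset s r + j < ∑ i, s i := by
  have h2 : r ∉ Finset.univ.filter (fun i => i < r) := by simp
  have h3 : ∑ i ∈ insert r (Finset.univ.filter (fun i => i < r)), s i ≤ ∑ i, s i :=
    Finset.sum_le_sum_of_subset (Finset.subset_univ _)
  rw [Finset.sum_insert h2] at h3
  unfold offset
  omega

/-- The `r`-th consecutive interval `J_r` of `{1,…,n}`, of length `s r`. -/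
def Jset {k : ℕ} (s : Fin k → ℕ) (n : ℕ) (r : Fin k) : Finset (Fin n) :=
  Finset.univ.filter fun i : Fin n => offset s r ≤ i.val ∧ i.val < offset s r + s r

/-! ### Wick products and matchings on index sets -/

lemma aProd_pair {M : Type*} [Ring M] {n : ℕ} (a : Fin n → M) {j x : Fin n} (h : j < x) :
    aProd a ({j, x} : Finset (Fin n)) = a j * a x := by
  have : ({j, x} : Finset (Fin n)).sort (· ≤ ·) = [j, x] := by
    have h1 := Finset.sort_insert (r := (· ≤ ·)) (a := j) (s := {x})
      (by simpa using h.le) (by simpa using h.ne)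
    rw [h1, Finset.sort_singleton]
  simp [aProd, this]

section Wick

variable {M : Type*} [Ring M] [Algebra ℂ M] {n : ℕ}

/-- The Wick product `W(a_i : i ∈ S)`, with the indices in increasing order. -/
def wS (W : (m : ℕ) → (Fin m → M) → TensorAlgebra ℂ M) (a : Fin n → M) (S : Finset (Fin n)) :
    TensorAlgebra ℂ M :=
  W S.card (fun i => a (S.orderEmbOfFin rfl i))

/-- The matchings of `S` (sets of pairwise disjoint two-element subsets) all of whose pairs are
admissible, that is, satisfy `A`. -/
def Mt (A : Finset (Fin n) → Prop) (S : Finset (Fin n)) : Finset (Finset (Finset (Fin n))) :=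
  Finset.univ.filter fun m =>
    (∀ B ∈ m, B ⊆ S ∧ B.card = 2 ∧ A B) ∧ ∀ B ∈ m, ∀ C ∈ m, ∀ i, i ∈ B → i ∈ C → B = C

/-- The sum over the admissible matchings of `S` of the weight of the matching times the Wick
product of the unmatched elements. -/
def G (E : M →ₗ[ℂ] ℂ) (W : (m : ℕ) → (Fin m → M) → TensorAlgebra ℂ M) (a : Fin n → M)
    (A : Finset (Fin n) → Prop) (S : Finset (Fin n)) : TensorAlgebra ℂ M :=
  ∑ m ∈ Mt A S, (∏ B ∈ m, E (aProd a B)) • wS W a (S \ m.biUnion id)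

lemma mem_Mt {A : Finset (Fin n) → Prop} {S : Finset (Fin n)} {m : Finset (Finset (Fin n))} :
    m ∈ Mt A S ↔ (∀ B ∈ m, B ⊆ S ∧ B.card = 2 ∧ A B) ∧
      ∀ B ∈ m, ∀ C ∈ m, ∀ i, i ∈ B → i ∈ C → B = C := by
  simp [Mt]

lemma W_eq_wS (W : (m : ℕ) → (Fin m → M) → TensorAlgebra ℂ M) (a : Fin n → M)
    (S : Finset (Fin n)) {m : ℕ} (f : Fin m → Fin n) (hf : StrictMono f)
    (hS : ∀ i, i ∈ S ↔ ∃ j, f j = i) : W m (fun j => a (f j)) = wS W a S := by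
  have hS' : S = Finset.univ.image f := by ext i; simp [hS]
  have hc : S.card = m := by
    rw [hS', Finset.card_image_of_injective _ hf.injective]; simp
  subst hc
  have := Finset.orderEmbOfFin_unique (s := S) rfl (f := f) (fun x => (hS _).2 ⟨x, rfl⟩) hf
  rw [this]
  rfl

/-- The defining recursion of `W`, in terms of index sets. -/
lemma wS_insert (E : M →ₗ[ℂ] ℂ)
    (W : (m : ℕ) → (Fin m → M) → TensorAlgebra ℂ M)
    (hW1 : ∀ a : Fin 1 → M, W 1 a = W 0 (Fin.init a) * TensorAlgebra.ι ℂ (a 0))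
    (hWrec : ∀ (m : ℕ) (a : Fin (m + 2) → M),
      W (m + 2) a =
        W (m + 1) (Fin.init a) * TensorAlgebra.ι ℂ (a (Fin.last (m + 1)))
          - ∑ i : Fin (m + 1),
              E (a i.castSucc * a (Fin.last (m + 1))) • W m (i.removeNth (Fin.init a)))
    (a : Fin n → M) (S : Finset (Fin n)) (x : Fin n) (hx : ∀ i ∈ S, i < x) :
    wS W a (insert x S) = wS W a S * TensorAlgebra.ι ℂ (a x)
      - ∑ j ∈ S, E (a j * a x) • wS W a (S.erase j) := by
  obtain ⟨m, hm⟩ : ∃ m, S.card = m := ⟨_, rfl⟩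
  set g : Fin m → Fin n := fun i => S.orderEmbOfFin hm i with hg
  have hgm : StrictMono g := (S.orderEmbOfFin hm).strictMono
  have hgS : ∀ i, i ∈ S ↔ ∃ j, g j = i := by
    intro i
    have := Finset.range_orderEmbOfFin S hm
    rw [← Finset.mem_coe, ← this]; rfl
  have hgx : ∀ j, g j < x := fun j => hx _ ((hgS _).2 ⟨j, rfl⟩)
  set f : Fin (m + 1) → Fin n := Fin.snoc (α := fun _ => Fin n) g x with hf
  have hf1 : ∀ j : Fin m, f j.castSucc = g j := fun j => by simp [hf]
  have hf2 : f (Fin.last m) = x := by simp [hf]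
  have hfm : StrictMono f := by
    intro i j hij
    induction i using Fin.lastCases with
    | last => exact absurd hij (not_lt.2 (Fin.le_last _))
    | cast i =>
      induction j using Fin.lastCases with
      | last => rw [hf1, hf2]; exact hgx i
      | cast j => rw [hf1, hf1]; exact hgm (by simpa using hij)
  have hfS : ∀ i, i ∈ insert x S ↔ ∃ j, f j = i := by
    intro i
    rw [Finset.mem_insert, hgS]
    constructor
    · rintro (rfl | ⟨j, rfl⟩)
      · exact ⟨_, hf2⟩
      · exact ⟨_, hf1 j⟩
    · rintro ⟨j, rfl⟩
      induction j using Fin.lastCases with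
      | last => exact Or.inl hf2
      | cast j => exact Or.inr ⟨j, (hf1 j).symm⟩
  rw [← W_eq_wS W a _ f hfm hfS, ← W_eq_wS W a S g hgm hgS]
  have hinit : Fin.init (fun j => a (f j)) = fun j => a (g j) := by
    funext j; simp [Fin.init, hf1]
  cases m with
  | zero =>
    have hS0 : S = ∅ := Finset.card_eq_zero.1 hm
    rw [hW1, hinit, hS0]
    have : f 0 = x := hf2
    simp [this]
  | succ m =>
    rw [hWrec, hinit, hf2]
    congr 1
    have hSim : S = Finset.univ.image g := by ext i; simp [hgS]
    have hsum : ∀ F : Fin n → TensorAlgebra ℂ M, ∑ j ∈ S, F j = ∑ i, F (g i) := by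
      intro F
      rw [hSim, Finset.sum_image (fun _ _ _ _ h => hgm.injective h)]
    rw [hsum]
    refine Finset.sum_congr rfl fun i _ => ?_
    rw [hf1]
    congr 1
    refine W_eq_wS W a (S.erase (g i)) (fun j => g (i.succAbove j))
      (hgm.comp (Fin.strictMono_succAbove i)) ?_
    intro l
    rw [Finset.mem_erase, hgS]
    constructor
    · rintro ⟨h1, j, rfl⟩
      have : j ≠ i := fun h => h1 (by rw [h])
      obtain ⟨j', rfl⟩ := Fin.exists_succAbove_eq this
      exact ⟨j', rfl⟩
    · rintro ⟨j, rfl⟩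
      exact ⟨fun h => Fin.succAbove_ne i j (hgm.injective h), _, rfl⟩

/-! ### The recursion for the sum over matchings -/

/-- Matchings of `S ∖ {j}` are the matchings of `S` that leave `j` unmatched. -/
lemma mem_Mt_erase {A : Finset (Fin n) → Prop} {S : Finset (Fin n)} {j : Fin n}
    {m : Finset (Finset (Fin n))} :
    m ∈ Mt A (S.erase j) ↔ m ∈ Mt A S ∧ j ∉ m.biUnion id := by
  simp only [mem_Mt, Finset.mem_biUnion, id, not_exists, not_and, Finset.subset_erase]
  constructor
  · rintro ⟨h1, h2⟩
    exact ⟨⟨fun B hB => ⟨(h1 B hB).1.1, (h1 B hB).2⟩, h2⟩, fun B hB => (h1 B hB).1.2⟩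
  · rintro ⟨⟨h1, h2⟩, h3⟩
    exact ⟨fun B hB => ⟨⟨(h1 B hB).1, h3 B hB⟩, (h1 B hB).2⟩, h2⟩

/-- Exchanges the choice of an element `j` with that of a matching leaving `j` unmatched. -/
lemma sum_erase_comm (A : Finset (Fin n) → Prop) (S : Finset (Fin n)) (p : Fin n → Prop)
    [DecidablePred p] {R : Type*} [AddCommMonoid R] (F : Fin n → Finset (Finset (Fin n)) → R) :
    ∑ j ∈ S.filter p, ∑ m ∈ Mt A (S.erase j), F j m
      = ∑ m ∈ Mt A S, ∑ j ∈ (S \ m.biUnion id).filter p, F j m := by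
  refine Finset.sum_comm' fun j m => ?_
  simp only [mem_Mt_erase, Finset.mem_filter, Finset.mem_sdiff]
  tauto

/-- Splits the matchings of `S ∪ {x}` according to the partner of `x`. -/
lemma sum_Mt_insert (A : Finset (Fin n) → Prop) (S : Finset (Fin n)) (x : Fin n) (hx : x ∉ S)
    {R : Type*} [AddCommMonoid R] (F : Finset (Finset (Fin n)) → R) :
    ∑ m ∈ Mt A (insert x S), F m = ∑ m ∈ Mt A S, F m
      + ∑ j ∈ S.filter (fun j => A {j, x}), ∑ m ∈ Mt A (S.erase j), F (insert {j, x} m) := by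
  rw [← Finset.sum_filter_add_sum_filter_not (Mt A (insert x S)) (fun m => x ∉ m.biUnion id)]
  congr 1
  · refine Finset.sum_congr ?_ fun _ _ => rfl
    ext m
    rw [Finset.mem_filter, ← mem_Mt_erase, Finset.erase_insert hx]
  · rw [Finset.sum_sigma']
    symm
    have hxm : ∀ {j : Fin n} {m}, m ∈ Mt A (S.erase j) → ∀ B ∈ m, x ∉ B := by
      intro j m hm B hB hxB
      exact hx (Finset.mem_of_mem_erase (((mem_Mt.1 hm).1 B hB).1 hxB))
    have hjm : ∀ {j : Fin n} {m}, m ∈ Mt A (S.erase j) → ∀ B ∈ m, j ∉ B := by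
      intro j m hm B hB hxB
      exact Finset.notMem_erase j S (((mem_Mt.1 hm).1 B hB).1 hxB)
    refine Finset.sum_bij (fun q _ => insert {q.1, x} q.2) ?_ ?_ ?_ ?_
    · rintro ⟨j, m⟩ hq
      simp only [Finset.mem_sigma, Finset.mem_filter] at hq
      obtain ⟨⟨hjS, hA⟩, hm⟩ := hq
      have hjx : j ≠ x := fun h => hx (h ▸ hjS)
      have hm' := mem_Mt.1 hm
      simp only [Finset.mem_filter, mem_Mt, not_not]
      refine ⟨⟨?_, ?_⟩, ?_⟩
      · intro B hB
        rcases Finset.mem_insert.1 hB with rfl | hB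
        · refine ⟨?_, Finset.card_pair hjx, hA⟩
          intro i hi
          simp only [Finset.mem_insert, Finset.mem_singleton] at hi ⊢
          rcases hi with rfl | rfl <;> simp [hjS]
        · obtain ⟨h1, h2⟩ := hm'.1 B hB
          exact ⟨fun i hi => Finset.mem_insert_of_mem (Finset.mem_of_mem_erase (h1 hi)), h2⟩
      · have key : ∀ C ∈ m, ∀ i, i ∈ ({j, x} : Finset (Fin n)) → i ∉ C := by
          intro C hC i hi
          simp only [Finset.mem_insert, Finset.mem_singleton] at hi
          rcases hi with rfl | rfl
          · exact hjm hm C hC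
          · exact hxm hm C hC
        intro B hB C hC i hiB hiC
        rcases Finset.mem_insert.1 hB with rfl | hB <;>
          rcases Finset.mem_insert.1 hC with rfl | hC
        · rfl
        · exact absurd hiC (key C hC i hiB)
        · exact absurd hiB (key B hB i hiC)
        · exact hm'.2 B hB C hC i hiB hiC
      · simp
    · rintro ⟨j, m⟩ hq ⟨j', m'⟩ hq' heq
      simp only [Finset.mem_sigma, Finset.mem_filter] at hq hq' heq
      have hjx : j ≠ x := fun h => hx (h ▸ hq.1.1)
      have n1 : ({j, x} : Finset (Fin n)) ∉ m := fun h => hxm hq.2 _ h (by simp)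
      have n2 : ({j', x} : Finset (Fin n)) ∉ m' := fun h => hxm hq'.2 _ h (by simp)
      have h1 : ({j, x} : Finset (Fin n)) ∈ insert ({j', x} : Finset (Fin n)) m' := by
        rw [← heq]; simp
      have hjj : j = j' := by
        rcases Finset.mem_insert.1 h1 with h1 | h1
        · have : j ∈ ({j', x} : Finset (Fin n)) := by rw [← h1]; simp
          simpa [hjx] using this
        · exact absurd (by simp) (hxm hq'.2 _ h1)
      subst hjj
      have : m = m' := by
        rw [← Finset.erase_insert n1, heq, Finset.erase_insert n2]
      rw [this]
    · intro m hm
      simp only [Finset.mem_filter, not_not, Finset.mem_biUnion, id] at hm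
      obtain ⟨hm, B, hB, hxB⟩ := hm
      have hm' := mem_Mt.1 hm
      obtain ⟨hBS, hBc, hBA⟩ := hm'.1 B hB
      obtain ⟨j, hj⟩ : ∃ j, B.erase x = {j} := by
        rw [← Finset.card_eq_one, Finset.card_erase_of_mem hxB, hBc]
      have hjB' : j ∈ B.erase x := by rw [hj]; simp
      have hjx := Finset.ne_of_mem_erase hjB'
      have hjB := Finset.mem_of_mem_erase hjB'
      have hBe : B = {j, x} := by
        rw [← Finset.insert_erase hxB, hj, Finset.pair_comm]
      refine ⟨⟨j, m.erase B⟩, ?_, ?_⟩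
      · simp only [Finset.mem_sigma, Finset.mem_filter]
        refine ⟨⟨Finset.mem_of_mem_insert_of_ne (hBS hjB) hjx, hBe ▸ hBA⟩, mem_Mt.2 ⟨?_, ?_⟩⟩
        · intro C hC
          obtain ⟨hCB, hC⟩ := Finset.mem_erase.1 hC
          obtain ⟨h1, h2⟩ := hm'.1 C hC
          refine ⟨fun i hi => ?_, h2⟩
          refine Finset.mem_erase.2 ⟨?_, Finset.mem_of_mem_insert_of_ne (h1 hi) ?_⟩
          · rintro rfl; exact hCB (hm'.2 C hC B hB _ hi hjB)
          · rintro rfl; exact hCB (hm'.2 C hC B hB _ hi hxB)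
        · intro C hC D hD
          exact hm'.2 C (Finset.mem_of_mem_erase hC) D (Finset.mem_of_mem_erase hD)
      · simp only
        rw [← hBe, Finset.insert_erase hB]
    · intro q hq
      rfl

/-- The recursion for `G`: only the inadmissible partners of the new maximum `x` are subtracted,
because the admissible ones are cancelled by the matchings containing `x`. -/
lemma G_insert (E : M →ₗ[ℂ] ℂ)
    (W : (m : ℕ) → (Fin m → M) → TensorAlgebra ℂ M)
    (hW1 : ∀ a : Fin 1 → M, W 1 a = W 0 (Fin.init a) * TensorAlgebra.ι ℂ (a 0))
    (hWrec : ∀ (m : ℕ) (a : Fin (m + 2) → M),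
      W (m + 2) a =
        W (m + 1) (Fin.init a) * TensorAlgebra.ι ℂ (a (Fin.last (m + 1)))
          - ∑ i : Fin (m + 1),
              E (a i.castSucc * a (Fin.last (m + 1))) • W m (i.removeNth (Fin.init a)))
    (a : Fin n → M) (A : Finset (Fin n) → Prop) (S : Finset (Fin n)) (x : Fin n)
    (hx : ∀ i ∈ S, i < x) :
    G E W a A (insert x S) = G E W a A S * TensorAlgebra.ι ℂ (a x)
      - ∑ j ∈ S.filter (fun j => ¬ A {j, x}), E (a j * a x) • G E W a A (S.erase j) := by
  have hxS : x ∉ S := fun h => lt_irrefl _ (hx x h)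
  unfold G
  rw [sum_Mt_insert A S x hxS]
  have e1 : ∀ m ∈ Mt A S, (∏ B ∈ m, E (aProd a B)) • wS W a (insert x S \ m.biUnion id)
      = (∏ B ∈ m, E (aProd a B)) • wS W a (S \ m.biUnion id) * TensorAlgebra.ι ℂ (a x)
        - ∑ j ∈ S \ m.biUnion id, E (a j * a x) • (∏ B ∈ m, E (aProd a B)) •
            wS W a (S.erase j \ m.biUnion id) := by
    intro m hm
    have hxm : x ∉ m.biUnion id := by
      simp only [Finset.mem_biUnion, id, not_exists, not_and]
      exact fun B hB hxB => hxS (((mem_Mt.1 hm).1 B hB).1 hxB)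
    rw [Finset.insert_sdiff_of_notMem _ hxm,
      wS_insert E W hW1 hWrec a _ x (fun i hi => hx i (Finset.mem_sdiff.1 hi).1), smul_sub,
      smul_mul_assoc, Finset.smul_sum]
    congr 1
    refine Finset.sum_congr rfl fun j _ => ?_
    rw [smul_comm, Finset.erase_sdiff_comm]
  have e2 : ∀ j ∈ S.filter (fun j => A {j, x}), ∀ m ∈ Mt A (S.erase j),
      (∏ B ∈ insert {j, x} m, E (aProd a B)) •
          wS W a (insert x S \ (insert {j, x} m).biUnion id)
        = E (a j * a x) • (∏ B ∈ m, E (aProd a B)) • wS W a (S.erase j \ m.biUnion id) := by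
    intro j hj m hm
    have hjS := (Finset.mem_filter.1 hj).1
    have hn : ({j, x} : Finset (Fin n)) ∉ m := fun h =>
      hxS (Finset.mem_of_mem_erase (((mem_Mt.1 hm).1 _ h).1 (by simp)))
    rw [Finset.prod_insert hn, aProd_pair a (hx j hjS), mul_smul]
    congr 3
    ext i
    simp only [Finset.mem_sdiff, Finset.mem_insert, Finset.biUnion_insert, Finset.mem_union,
      id, Finset.mem_singleton, Finset.mem_erase]
    have : i ∈ S → i ≠ x := fun h h' => hxS (h' ▸ h)
    tauto
  rw [Finset.sum_congr rfl e1, Finset.sum_congr rfl (fun j hj => Finset.sum_congr rfl (e2 j hj)),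
    Finset.sum_sub_distrib, ← Finset.sum_mul]
  simp only [Finset.smul_sum]
  rw [sum_erase_comm A S (fun j => A {j, x}), sum_erase_comm A S (fun j => ¬ A {j, x})]
  have e3 : ∀ m ∈ Mt A S, ∑ j ∈ S \ m.biUnion id, E (a j * a x) • (∏ B ∈ m, E (aProd a B)) •
            wS W a (S.erase j \ m.biUnion id)
      = ∑ j ∈ (S \ m.biUnion id).filter (fun j => A {j, x}),
          E (a j * a x) • (∏ B ∈ m, E (aProd a B)) • wS W a (S.erase j \ m.biUnion id)
        + ∑ j ∈ (S \ m.biUnion id).filter (fun j => ¬ A {j, x}),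
          E (a j * a x) • (∏ B ∈ m, E (aProd a B)) • wS W a (S.erase j \ m.biUnion id) :=
    fun m _ => (Finset.sum_filter_add_sum_filter_not _ _ _).symm
  rw [Finset.sum_congr rfl e3, Finset.sum_add_distrib]
  abel

/-! ### Factorization over consecutive intervals -/

/-- If `V` lies to the right of `T`, all pairs inside `V` are inadmissible and all pairs between `T`
and `V` are admissible, then `G` of the union factors. By induction on `V`, since removing the
maximum of `V` gives `G` of the union and `W(V)` the same recursion. -/
lemma G_union (E : M →ₗ[ℂ] ℂ)
    (W : (m : ℕ) → (Fin m → M) → TensorAlgebra ℂ M)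
    (hW0 : ∀ a : Fin 0 → M, W 0 a = 1)
    (hW1 : ∀ a : Fin 1 → M, W 1 a = W 0 (Fin.init a) * TensorAlgebra.ι ℂ (a 0))
    (hWrec : ∀ (m : ℕ) (a : Fin (m + 2) → M),
      W (m + 2) a =
        W (m + 1) (Fin.init a) * TensorAlgebra.ι ℂ (a (Fin.last (m + 1)))
          - ∑ i : Fin (m + 1),
              E (a i.castSucc * a (Fin.last (m + 1))) • W m (i.removeNth (Fin.init a)))
    (a : Fin n → M) (A : Finset (Fin n) → Prop) (T : Finset (Fin n)) :
    ∀ V : Finset (Fin n), (∀ t ∈ T, ∀ v ∈ V, t < v) → (∀ t ∈ T, ∀ v ∈ V, A {t, v}) →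
      (∀ u ∈ V, ∀ v ∈ V, ¬ A {u, v}) → G E W a A (T ∪ V) = G E W a A T * wS W a V := by
  intro V
  induction V using Finset.strongInduction with
  | H V ih =>
    intro h1 h2 h3
    rcases V.eq_empty_or_nonempty with rfl | hV
    · have : wS W a ∅ = 1 := hW0 _
      simp [this]
    · set x := V.max' hV with hxdef
      have hxV : x ∈ V := V.max'_mem hV
      have sub : V.erase x ⊂ V := Finset.erase_ssubset hxV
      have IH : ∀ V' ⊂ V, G E W a A (T ∪ V') = G E W a A T * wS W a V' := fun V' h =>
        ih V' h (fun t ht v hv => h1 t ht v (h.1 hv)) (fun t ht v hv => h2 t ht v (h.1 hv))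
          (fun u hu v hv => h3 u (h.1 hu) v (h.1 hv))
      have hlt : ∀ i ∈ V.erase x, i < x := fun i hi =>
        lt_of_le_of_ne (V.le_max' i (Finset.mem_of_mem_erase hi)) (Finset.ne_of_mem_erase hi)
      have hTV : T ∪ V = insert x (T ∪ V.erase x) := by
        rw [← Finset.union_insert, Finset.insert_erase hxV]
      have hfil : (T ∪ V.erase x).filter (fun j => ¬ A {j, x}) = V.erase x := by
        ext i
        simp only [Finset.mem_filter, Finset.mem_union]
        constructor
        · rintro ⟨h | h, hA⟩
          · exact absurd (h2 i h x hxV) hA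
          · exact h
        · exact fun h => ⟨Or.inr h, h3 i (Finset.mem_of_mem_erase h) x hxV⟩
      rw [hTV, G_insert E W hW1 hWrec a A _ x, hfil, IH _ sub]
      · conv_rhs => rw [← Finset.insert_erase hxV, wS_insert E W hW1 hWrec a _ x hlt]
        rw [mul_sub, Finset.mul_sum, mul_assoc]
        congr 1
        refine Finset.sum_congr rfl fun j hj => ?_
        have hjT : j ∉ T := fun h => lt_irrefl _ (h1 j h j (Finset.mem_of_mem_erase hj))
        rw [Finset.erase_union_distrib, Finset.erase_eq_of_notMem hjT,
          IH _ ((Finset.erase_subset _ _).trans_ssubset sub), mul_smul_comm]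
      · intro i hi
        rcases Finset.mem_union.1 hi with h | h
        · exact h1 i h x hxV
        · exact hlt i h

lemma prod_ofFn_eq {R : Type*} [Monoid R] (g : ℕ → R) (h0 : g 0 = 1) :
    ∀ (k : ℕ) (f : Fin k → R), (∀ r : Fin k, g (r.val + 1) = g r.val * f r) →
      (List.ofFn f).prod = g k := by
  intro k
  induction k with
  | zero => intro f _; simp [h0]
  | succ k ih =>
    intro f hf
    have h1 := hf (Fin.last k)
    simp only [Fin.val_last] at h1
    rw [List.ofFn_succ', List.concat_eq_append, List.prod_append,
      ih (fun i => f i.castSucc) (fun r => by simpa using hf r.castSucc), List.prod_singleton, h1]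

/-! ### Partitions and matchings -/

/-- A partition into blocks of size one and two has `{i}` as a block exactly when `i` lies in no
two-element block. -/
lemma singleton_mem_iff {π : Finset (Finset (Fin n))} (h : IsPartition π)
    (h12 : ∀ B ∈ π, B.card = 1 ∨ B.card = 2) (i : Fin n) :
    {i} ∈ π ↔ i ∉ (π.filter fun B => B.card = 2).biUnion id := by
  simp only [Finset.mem_biUnion, Finset.mem_filter, id, not_exists, not_and, and_imp]
  obtain ⟨B, ⟨hB, hiB⟩, hu⟩ := h.2 i
  constructor
  · intro hi C hC hC2 hiC
    have e1 := hu C ⟨hC, hiC⟩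
    have e2 := hu {i} ⟨hi, by simp⟩
    rw [e1, ← e2] at hC2
    simp at hC2
  · intro hC
    rcases h12 B hB with h1 | h2
    · obtain ⟨j, rfl⟩ := Finset.card_eq_one.1 h1
      rw [Finset.mem_singleton] at hiB
      rwa [hiB]
    · exact absurd hiB (hC B hB h2)

/-- Partitions into blocks of size one and two correspond to matchings, by forgetting the
singleton blocks. -/
lemma sum_partitions (E : M →ₗ[ℂ] ℂ) (W : (m : ℕ) → (Fin m → M) → TensorAlgebra ℂ M)
    (a : Fin n → M) (A : Finset (Fin n) → Prop)
    (Q : Finset (Finset (Fin n)) → Prop) [DecidablePred Q]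
    (hQ : ∀ π, Q π ↔ (IsPartition π ∧ ∀ B ∈ π, B.card = 1 ∨ B.card = 2)
      ∧ ∀ B ∈ π, B.card = 2 → A B) :
    ∑ π ∈ Finset.univ.filter Q,
          (∏ B ∈ π.filter fun B => B.card = 2, E (aProd a B)) •
            W (singL π).length (fun j => a ((singL π).get j))
      = G E W a A Finset.univ := by
  unfold G
  refine Finset.sum_bij (fun π _ => π.filter fun B => B.card = 2) ?_ ?_ ?_ ?_
  · intro π hπ
    obtain ⟨⟨hp, h12⟩, hA⟩ := (hQ _).1 (Finset.mem_filter.1 hπ).2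
    refine mem_Mt.2 ⟨?_, ?_⟩
    · intro B hB
      obtain ⟨hB, hB2⟩ := Finset.mem_filter.1 hB
      exact ⟨Finset.subset_univ _, hB2, hA B hB hB2⟩
    · intro B hB C hC i hiB hiC
      exact (hp.2 i).unique ⟨(Finset.mem_filter.1 hB).1, hiB⟩ ⟨(Finset.mem_filter.1 hC).1, hiC⟩
  · have key : ∀ π ρ : Finset (Finset (Fin n)), IsPartition π → IsPartition ρ →
        (∀ B ∈ π, B.card = 1 ∨ B.card = 2) → (∀ B ∈ ρ, B.card = 1 ∨ B.card = 2) →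
        (π.filter fun B => B.card = 2) = (ρ.filter fun B => B.card = 2) → π ⊆ ρ := by
      intro π ρ hπ hρ h12 h12' heq B hB
      rcases h12 B hB with h1 | h2
      · obtain ⟨i, rfl⟩ := Finset.card_eq_one.1 h1
        rw [singleton_mem_iff hρ h12', ← heq, ← singleton_mem_iff hπ h12]
        exact hB
      · have : B ∈ π.filter fun B => B.card = 2 := Finset.mem_filter.2 ⟨hB, h2⟩
        rw [heq] at this
        exact (Finset.mem_filter.1 this).1
    intro π hπ ρ hρ heq
    obtain ⟨⟨hp, h12⟩, hA⟩ := (hQ _).1 (Finset.mem_filter.1 hπ).2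
    obtain ⟨⟨hp', h12'⟩, hA'⟩ := (hQ _).1 (Finset.mem_filter.1 hρ).2
    exact (key π ρ hp hp' h12 h12' heq).antisymm (key ρ π hp' hp h12' h12 heq.symm)
  · intro m hm
    obtain ⟨h1, h2⟩ := mem_Mt.1 hm
    set π := m ∪ (Finset.univ \ m.biUnion id).image (fun i => ({i} : Finset (Fin n))) with hπ
    have hmem : ∀ B, B ∈ π ↔ B ∈ m ∨ ∃ i, (∀ C ∈ m, i ∉ C) ∧ {i} = B := by
      intro B
      simp [hπ]
    refine ⟨π, Finset.mem_filter.2 ⟨Finset.mem_univ _, (hQ _).2 ⟨⟨⟨?_, ?_⟩, ?_⟩, ?_⟩⟩, ?_⟩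
    · intro B hB
      rcases (hmem B).1 hB with h | ⟨i, _, rfl⟩
      · rw [← Finset.card_pos, (h1 B h).2.1]; norm_num
      · simp
    · intro i
      by_cases hi : ∃ C ∈ m, i ∈ C
      · obtain ⟨C, hC, hiC⟩ := hi
        refine ⟨C, ⟨(hmem C).2 (Or.inl hC), hiC⟩, ?_⟩
        rintro D ⟨hD, hiD⟩
        rcases (hmem D).1 hD with h | ⟨j, hj, rfl⟩
        · exact h2 D h C hC i hiD hiC
        · rw [Finset.mem_singleton] at hiD
          exact absurd (hiD ▸ hiC) (hj C hC)
      · push Not at hi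
        refine ⟨{i}, ⟨(hmem _).2 (Or.inr ⟨i, hi, rfl⟩), by simp⟩, ?_⟩
        rintro D ⟨hD, hiD⟩
        rcases (hmem D).1 hD with h | ⟨j, hj, rfl⟩
        · exact absurd hiD (hi D h)
        · rw [Finset.mem_singleton] at hiD
          rw [hiD]
    · intro B hB
      rcases (hmem B).1 hB with h | ⟨i, _, rfl⟩
      · exact Or.inr (h1 B h).2.1
      · simp
    · intro B hB hB2
      rcases (hmem B).1 hB with h | ⟨i, _, rfl⟩
      · exact (h1 B h).2.2
      · simp at hB2
    · ext B
      rw [Finset.mem_filter, hmem]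
      constructor
      · rintro ⟨h | ⟨i, _, rfl⟩, hB2⟩
        · exact h
        · simp at hB2
      · exact fun h => ⟨Or.inl h, (h1 B h).2.1⟩
  · intro π hπ
    obtain ⟨⟨hp, h12⟩, hA⟩ := (hQ _).1 (Finset.mem_filter.1 hπ).2
    congr 1
    refine W_eq_wS W a _ (fun j => (singL π).get j) ?_ ?_
    · exact (Finset.sortedLT_sort _).strictMono_get
    · intro i
      rw [Finset.mem_sdiff, ← singleton_mem_iff hp h12, ← Set.mem_range, Set.range_list_get]
      simp [singL]

end Wick

/-! ### The product of Wick products -/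

theorem stmt9 {M : Type*} [Ring M] [Algebra ℂ M] (E : M →ₗ[ℂ] ℂ)
    (W : (m : ℕ) → (Fin m → M) → TensorAlgebra ℂ M)
    (hW0 : ∀ a : Fin 0 → M, W 0 a = 1)
    (hW1 : ∀ a : Fin 1 → M, W 1 a = W 0 (Fin.init a) * TensorAlgebra.ι ℂ (a 0))
    (hWrec : ∀ (m : ℕ) (a : Fin (m + 2) → M),
      W (m + 2) a =
        W (m + 1) (Fin.init a) * TensorAlgebra.ι ℂ (a (Fin.last (m + 1)))
          - ∑ i : Fin (m + 1),
              E (a i.castSucc * a (Fin.last (m + 1))) • W m (i.removeNth (Fin.init a)))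
    (k : ℕ) (s : Fin k → ℕ) (hs : ∀ r, 1 ≤ s r)
    (n : ℕ) (hn : n = ∑ i, s i) (a : Fin n → M) :
    (List.ofFn fun r : Fin k =>
        W (s r) (fun j : Fin (s r) =>
          a ⟨offset s r + j.val, by rw [hn]; exact offset_add_lt s r j.val j.isLt⟩)).prod
      = ∑ π ∈ Finset.univ.filter (fun π : Finset (Finset (Fin n)) =>
            (IsPartition π ∧ ∀ B ∈ π, B.card = 1 ∨ B.card = 2)
              ∧ ∀ B ∈ π, B.card = 2 → ∀ r : Fin k, ¬ B ⊆ Jset s n r),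
          (∏ B ∈ π.filter fun B => B.card = 2, E (aProd a B)) •
            W (singL π).length (fun j => a ((singL π).get j)) := by
  -- `P t` is the total length of the first `t` intervals, so that `J_r = [P r, P (r + 1))`.
  set P : ℕ → ℕ := fun t => ∑ i ∈ Finset.univ.filter (fun i : Fin k => i.val < t), s i with hP
  have hPmono : ∀ t u, t ≤ u → P t ≤ P u := by
    intro t u htu
    refine Finset.sum_le_sum_of_subset fun i hi => ?_
    simp only [Finset.mem_filter, Finset.mem_univ, true_and] at hi ⊢
    omega
  have hoff : ∀ r : Fin k, offset s r = P r.val := fun r => rfl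
  have hPs : ∀ r : Fin k, P (r.val + 1) = P r.val + s r := by
    intro r
    have : Finset.univ.filter (fun i : Fin k => i.val < r.val + 1)
        = insert r (Finset.univ.filter (fun i : Fin k => i.val < r.val)) := by
      ext i
      simp only [Finset.mem_filter, Finset.mem_univ, true_and, Finset.mem_insert, Fin.ext_iff]
      omega
    simp only [hP]
    rw [this, Finset.sum_insert (by simp), add_comm]
  have hPk : P k = n := by
    rw [hn]
    simp only [hP]
    congr 1
    ext i
    simp
  have hP0 : P 0 = 0 := by simp [hP]
  have hJ : ∀ (r : Fin k) (i : Fin n),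
      i ∈ Jset s n r ↔ P r.val ≤ i.val ∧ i.val < P (r.val + 1) := by
    intro r i
    simp [Jset, hoff, hPs]
  -- A pair is admissible when it lies in no single interval.
  set A : Finset (Fin n) → Prop := fun B => ∀ r : Fin k, ¬ B ⊆ Jset s n r with hA
  rw [sum_partitions E W a A _ (fun π => Iff.rfl)]
  -- `U t` is the union of the first `t` intervals.
  set U : ℕ → Finset (Fin n) := fun t => Finset.univ.filter (fun i : Fin n => i.val < P t) with hU
  have hUm : ∀ t i, i ∈ U t ↔ i.val < P t := by intro t i; simp [hU]
  have hUk : U k = Finset.univ := by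
    ext i; simp [hUm, hPk]
  rw [← hUk]
  refine prod_ofFn_eq (fun t => G E W a A (U t)) ?_ k _ ?_
  · have hU0 : U 0 = ∅ := by ext i; simp [hUm, hP0]
    have hM : Mt A (∅ : Finset (Fin n)) = {∅} := by
      ext m
      rw [mem_Mt, Finset.mem_singleton]
      constructor
      · rintro ⟨h, -⟩
        refine Finset.eq_empty_of_forall_notMem fun B hB => ?_
        obtain ⟨h1, h2, -⟩ := h B hB
        rw [Finset.subset_empty.1 h1] at h2
        simp at h2
      · rintro rfl; simp
    have hw : wS W a ∅ = 1 := hW0 _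
    simp [hU0, G, hM, hw]
  · intro r
    have hUr : U (r.val + 1) = U r.val ∪ Jset s n r := by
      ext i
      have := hPs r
      rw [Finset.mem_union, hUm, hUm, hJ]
      omega
    simp only [hUr]
    rw [G_union E W hW0 hW1 hWrec a A (U r.val) (Jset s n r)]
    · congr 1
      symm
      refine W_eq_wS W a (Jset s n r) (fun j : Fin (s r) => (⟨offset s r + j.val, by
        rw [hn]; exact offset_add_lt s r j.val j.isLt⟩ : Fin n)) ?_ ?_
      · intro i j hij
        exact Fin.lt_def.2 (Nat.add_lt_add_left hij _)
      · intro i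
        rw [hJ, hPs, ← hoff]
        constructor
        · rintro ⟨h1, h2⟩
          exact ⟨⟨i.val - offset s r, by omega⟩, Fin.ext (by simp only []; omega)⟩
        · rintro ⟨j, rfl⟩
          have := j.isLt
          simp only []
          omega
    · intro t ht v hv
      rw [hUm] at ht
      rw [hJ] at hv
      exact Fin.lt_def.2 (by omega)
    · intro t ht v hv q hq
      rw [hUm] at ht
      rw [hJ] at hv
      have h1 := (hJ q t).1 (hq (by simp))
      have h2 := (hJ q v).1 (hq (by simp))
      rcases le_or_gt r.val q.val with h | h
      · have := hPmono _ _ h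
        omega
      · have := hPmono _ _ (Nat.succ_le_of_lt h)
        simp only [Nat.succ_eq_add_one] at this
        omega
    · intro u hu v hv hAuv
      refine hAuv r fun i hi => ?_
      simp only [Finset.mem_insert, Finset.mem_singleton] at hi
      rcases hi with rfl | rfl <;> assumption
end
end

section
/- Let M be a commutative associative ℂ-algebra, E : M → ℂ a linear functional, and let W_n : M^n → Γ(M) be the multilinear maps determined by W() = 1 and the recursion W(a₁,…,a_{n+1}) = W(a₁,…,a_n)·X(a_{n+1}) − E(a_{n+1})·W(a₁,…,a_n) − Σ_{i=1}^n W(a₁,…,â_i,…,a_n, a_i a_{n+1}) − Σ_{i=1}^n E(a_i a_{n+1})·W(a₁,…,â_i,…,a_n). Then for all a₁,…,a_n ∈ M: W(a₁,…,a_n) = Σ_{(π,S)} (−1)^{n−|S|} (Π_{U ∈ π∖S} E(a_U)) · (Π_{V ∈ S} (|V|−1)!) · X(a_{V₁})X(a_{V₂})⋯X(a_{V_m}), where the sum is over all (π,S) ∈ IP(n) such that every closed block of π is a singleton, |S| is the number of open blocks, and V₁,…,V_m are the open blocks listed in increasing order of their largest elements. -/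
/-!
For a subset `s` of the index set, let `V(s)` be `W` evaluated at the subfamily `(a_i)_{i ∈ s}`
(`SubW`), and let `m` be the largest element of `s`. Both `V` and the partition sum over `s`
(`ipSum`) satisfy

  `F(s) = ∑_{T ⊆ s \ {m}} (-1)^|T| |T|! F(s \ {m} \ T) X(a_{T ∪ {m}}) - E(a_m) F(s \ {m})`

and `F(∅) = 1`, so they agree, by induction on `s`.

For `V` (`subW_unroll`), apply the recursion inductively to the terms in which `a_i` is merged into
`a_m`. The part `E(a_i a_m) V(s \ {m, i})` that each of them contributes cancels the last sum of the
defining recursion, and the letters `X(a_{T ∪ {m}})` that remain are collected by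
`sum_powerset_insert`.

For the partition sum (`ipSum_unroll`), the summands are grouped by the block containing `m`: it is
either the closed singleton `{m}` or an open block `T ∪ {m}`. In the second case its letter is the
last one, because `m` is the largest index, and its weight is `|T|!`.

An incomplete partition whose closed blocks are singletons is determined by its family of open
blocks, which may be any family of disjoint nonempty sets; hence the sum in the theorem is `ipSum`
over the whole index set (`sum_partitions_eq_ipSum`).
-/

open Finset
open scoped Classical

noncomputable section

/-- The block of `P` containing `i`. -/
def blockOf {n : ℕ} (P : Finset (Finset (Fin n))) (i : Fin n) : Finset (Fin n) :=
  Finset.univ.filter fun x => ∃ B ∈ P, i ∈ B ∧ x ∈ B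

/-- The largest elements of the blocks of `T`, in increasing order. -/
def maxElts {n : ℕ} (T : Finset (Finset (Fin n))) : List (Fin n) :=
  (Finset.univ.filter fun i : Fin n => ∃ B ∈ T, i ∈ B ∧ ∀ x ∈ B, x ≤ i).sort (· ≤ ·)

/-! ### The recursion over subsets of the index set -/

/-- `W` evaluated at the subfamily of `a` indexed by `s`, taken in increasing order. -/
def SubW {M : Type*} [CommRing M] [Algebra ℂ M]
    (W : (m : ℕ) → (Fin m → M) → TensorAlgebra ℂ M) {n : ℕ} (a : Fin n → M)
    (s : Finset (Fin n)) : TensorAlgebra ℂ M :=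
  W s.card (a ∘ s.orderEmbOfFin rfl)

section
variable {M : Type*} [CommRing M] [Algebra ℂ M]

/-- Any strictly increasing enumeration of `s` computes `SubW W a s`. -/
lemma subW_eq (W : (m : ℕ) → (Fin m → M) → TensorAlgebra ℂ M) {n : ℕ} (a : Fin n → M)
    (s : Finset (Fin n)) {k : ℕ} (h : s.card = k) (f : Fin k → Fin n) (hf : StrictMono f)
    (hfs : ∀ x, f x ∈ s) : SubW W a s = W k (a ∘ f) := by
  subst h
  rw [Finset.orderEmbOfFin_unique rfl hfs hf]
  rfl

lemma subW_congr (W : (m : ℕ) → (Fin m → M) → TensorAlgebra ℂ M) {n : ℕ} (a b : Fin n → M)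
    (s : Finset (Fin n)) (h : ∀ i ∈ s, a i = b i) : SubW W a s = SubW W b s := by
  unfold SubW
  congr 1
  funext i
  exact h _ (Finset.orderEmbOfFin_mem _ _ _)

/-- The defining recursion of `W`, for the subfamily indexed by `s` with largest index `m`. Merging
`a_i` into the last argument means dropping `i` and changing the value of `a` at `m`. -/
lemma subW_rec (E : M →ₗ[ℂ] ℂ)
    (W : (m : ℕ) → (Fin m → M) → TensorAlgebra ℂ M)
    (hW1 : ∀ a : Fin 1 → M,
      W 1 a = W 0 (Fin.init a) * TensorAlgebra.ι ℂ (a 0)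
        - E (a 0) • W 0 (Fin.init a))
    (hWrec : ∀ (m : ℕ) (a : Fin (m + 2) → M),
      W (m + 2) a =
        W (m + 1) (Fin.init a) * TensorAlgebra.ι ℂ (a (Fin.last (m + 1)))
          - E (a (Fin.last (m + 1))) • W (m + 1) (Fin.init a)
          - ∑ i : Fin (m + 1),
              W (m + 1) (Fin.snoc (i.removeNth (Fin.init a))
                (a i.castSucc * a (Fin.last (m + 1))))
          - ∑ i : Fin (m + 1),
              E (a i.castSucc * a (Fin.last (m + 1))) • W m (i.removeNth (Fin.init a)))
    {n : ℕ} (a : Fin n → M) (s : Finset (Fin n)) (m : Fin n) (hm : m ∈ s)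
    (hmax : ∀ x ∈ s, x ≤ m) :
    SubW W a s = SubW W a (s.erase m) * TensorAlgebra.ι ℂ (a m)
      - E (a m) • SubW W a (s.erase m)
      - ∑ i ∈ s.erase m, SubW W (Function.update a m (a i * a m)) (s.erase i)
      - ∑ i ∈ s.erase m, E (a i * a m) • SubW W a ((s.erase m).erase i) := by
  obtain ⟨k, hk⟩ : ∃ k, s.card = k + 1 :=
    Nat.exists_eq_succ_of_ne_zero (Finset.card_ne_zero_of_mem hm)
  have hlast : s.orderEmbOfFin hk (Fin.last k) = m := by
    apply le_antisymm (hmax _ (Finset.orderEmbOfFin_mem _ _ _))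
    have : m ∈ Set.range (s.orderEmbOfFin hk) := by simpa using hm
    obtain ⟨j, rfl⟩ := this
    exact (s.orderEmbOfFin hk).monotone (Fin.le_last j)
  have hk' : (s.erase m).card = k := by rw [Finset.card_erase_of_mem hm, hk]; rfl
  set e := s.orderEmbOfFin hk with he
  have hemem : ∀ j, e j ∈ s := fun j => Finset.orderEmbOfFin_mem _ _ _
  have hinit : ∀ j : Fin k, e j.castSucc ∈ s.erase m := fun j => by
    rw [Finset.mem_erase]
    refine ⟨?_, hemem _⟩
    rw [← hlast]
    exact fun h => (Fin.castSucc_lt_last j).ne (e.injective h)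
  have hmono : StrictMono fun j : Fin k => e j.castSucc :=
    e.strictMono.comp Fin.strictMono_castSucc
  have h1 : SubW W a s = W (k + 1) (a ∘ e) := subW_eq W a s hk e e.strictMono hemem
  have h2 : SubW W a (s.erase m) = W k (Fin.init (a ∘ e)) :=
    subW_eq W a _ hk' _ hmono hinit
  have hsum : ∀ g : Fin n → TensorAlgebra ℂ M,
      ∑ i ∈ s.erase m, g i = ∑ j : Fin k, g (e j.castSucc) := by
    intro g
    rw [← Finset.map_orderEmbOfFin_univ (s.erase m) hk', Finset.sum_map]
    refine Finset.sum_congr rfl fun j _ => ?_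
    have := congrFun (Finset.orderEmbOfFin_unique hk' hinit hmono) j
    exact congrArg g this.symm
  rw [h1, h2, hsum, hsum]
  rcases k with _ | k
  · rw [hW1]
    simp [← hlast]
  · rw [hWrec]
    have hme : a m = (a ∘ e) (Fin.last (k + 1)) := by simp [hlast]
    rw [hme]
    congr 1
    · congr 1
      refine Finset.sum_congr rfl fun i _ => ?_
      rw [subW_eq W _ (s.erase (e i.castSucc)) (k := k + 1)
        (by rw [Finset.card_erase_of_mem (hemem _), hk]; rfl)
        (fun j => e (i.castSucc.succAbove j)) (e.strictMono.comp (Fin.strictMono_succAbove _))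
        (fun j => Finset.mem_erase.2 ⟨fun h => Fin.succAbove_ne _ _ (e.injective h), hemem _⟩)]
      congr 1
      funext j
      refine Fin.lastCases ?_ (fun j => ?_) j
      · simp [hlast]
      · have : e (i.succAbove j).castSucc ≠ m := (Finset.mem_erase.1 (hinit _)).1
        rw [Fin.snoc_castSucc]
        change a (e (i.succAbove j).castSucc) = Function.update a m _
          (e (i.castSucc.succAbove j.castSucc))
        rw [ Fin.castSucc_succAbove_castSucc,
          Function.update_of_ne this]
    · refine Finset.sum_congr rfl fun i _ => ?_
      congr 1
      symm
      refine subW_eq W a _ ?_ (fun j => e (i.succAbove j).castSucc)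
        (hmono.comp (Fin.strictMono_succAbove _)) ?_
      · rw [Finset.card_erase_of_mem (hinit i), hk']; rfl
      · exact fun j => Finset.mem_erase.2
          ⟨fun h => Fin.succAbove_ne i j (Fin.castSucc_injective _ (e.injective h)), hinit _⟩

/-- Regrouping by `insert i T`: a nonempty set `T'` arises from `|T'|` pairs `(i, T)`, and
`|T'| · (|T'| - 1)! = |T'|!`. -/
lemma sum_powerset_insert {A : Type*} [AddCommGroup A] [Module ℂ A] {α : Type*}
    [DecidableEq α]
    (s : Finset α) (F : Finset α → A) :
    ∑ T ∈ s.powerset, ((-1 : ℂ) ^ T.card * (T.card.factorial : ℂ)) • F T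
      = F ∅ - ∑ i ∈ s, ∑ T ∈ (s.erase i).powerset,
          ((-1 : ℂ) ^ T.card * (T.card.factorial : ℂ)) • F (insert i T) := by
  have h : ∑ i ∈ s, ∑ T ∈ (s.erase i).powerset,
          ((-1 : ℂ) ^ T.card * (T.card.factorial : ℂ)) • F (insert i T)
      = ∑ T ∈ s.powerset, ∑ i ∈ T,
          ((-1 : ℂ) ^ (T.card - 1) * ((T.card - 1).factorial : ℂ)) • F T := by
    rw [Finset.sum_sigma', Finset.sum_sigma']
    refine Finset.sum_bij' (fun p _ => ⟨insert p.1 p.2, p.1⟩) (fun p _ => ⟨p.2, p.1.erase p.2⟩)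
      ?_ ?_ ?_ ?_ ?_
    · rintro ⟨i, T⟩ h
      simp only [Finset.mem_sigma, Finset.mem_powerset] at h ⊢
      grind
    · rintro ⟨T, i⟩ h
      simp only [Finset.mem_sigma, Finset.mem_powerset] at h ⊢
      grind
    · rintro ⟨i, T⟩ h
      simp only [Finset.mem_sigma, Finset.mem_powerset] at h ⊢
      rw [Finset.erase_insert (by grind)]
    · rintro ⟨T, i⟩ h
      simp only [Finset.mem_sigma, Finset.mem_powerset] at h ⊢
      rw [Finset.insert_erase h.2]
    · rintro ⟨i, T⟩ h
      simp only [Finset.mem_sigma, Finset.mem_powerset] at h ⊢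
      rw [Finset.card_insert_of_notMem (by grind)]
      simp
  have h0 : F ∅ = ∑ T ∈ s.powerset, if T = ∅ then F T else 0 := by
    rw [Finset.sum_ite_eq' s.powerset ∅ F]
    simp
  rw [h, h0, ← Finset.sum_sub_distrib]
  refine Finset.sum_congr rfl fun T _ => ?_
  rw [Finset.sum_const]
  rcases T.eq_empty_or_nonempty with rfl | hT
  · simp
  · obtain ⟨k, hk⟩ := Nat.exists_eq_succ_of_ne_zero (Finset.card_ne_zero.2 hT)
    rw [if_neg hT.ne_empty, hk, zero_sub, ← Nat.cast_smul_eq_nsmul ℂ, smul_smul, ← neg_smul]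
    congr 1
    simp [Nat.factorial_succ, pow_succ]
    ring

/-- Iterating the merging terms of the recursion: `T ∪ {m}` is the set of indices eventually
multiplied into the last argument when it is split off as a letter, and the `|T|!` orders in which
this can happen give the weight. -/
lemma subW_unroll (E : M →ₗ[ℂ] ℂ)
    (W : (m : ℕ) → (Fin m → M) → TensorAlgebra ℂ M) {n : ℕ}
    (hrec : ∀ (a : Fin n → M) (s : Finset (Fin n)) (m : Fin n), m ∈ s → (∀ x ∈ s, x ≤ m) →
      SubW W a s = SubW W a (s.erase m) * TensorAlgebra.ι ℂ (a m)
      - E (a m) • SubW W a (s.erase m)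
      - ∑ i ∈ s.erase m, SubW W (Function.update a m (a i * a m)) (s.erase i)
      - ∑ i ∈ s.erase m, E (a i * a m) • SubW W a ((s.erase m).erase i))
    (m : Fin n) (k : ℕ) : ∀ (a : Fin n → M) (s : Finset (Fin n)), s.card = k → m ∈ s →
      (∀ x ∈ s, x ≤ m) →
    SubW W a s = ∑ T ∈ (s.erase m).powerset, ((-1 : ℂ) ^ T.card * (T.card.factorial : ℂ)) •
        (SubW W a ((s.erase m) \ T) * TensorAlgebra.ι ℂ (a m * ∏ i ∈ T, a i))
      - E (a m) • SubW W a (s.erase m) := by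
  induction k with
  | zero =>
    intro a s hs hm
    simp [Finset.card_eq_zero.1 hs] at hm
  | succ k ih =>
    intro a s hs hm hmax
    -- The last term cancels the terms `E (a i * a m) • W(…)` of the recursion.
    have key : ∀ i ∈ s.erase m, SubW W (Function.update a m (a i * a m)) (s.erase i)
        = ∑ T ∈ ((s.erase m).erase i).powerset,
            ((-1 : ℂ) ^ T.card * (T.card.factorial : ℂ)) •
              (SubW W a ((s.erase m) \ insert i T)
                * TensorAlgebra.ι ℂ (a m * ∏ j ∈ insert i T, a j))
          - E (a i * a m) • SubW W a ((s.erase m).erase i) := by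
      intro i hi
      have hi' := Finset.mem_erase.1 hi
      rw [ih _ (s.erase i) (by rw [Finset.card_erase_of_mem hi'.2, hs]; rfl)
        (Finset.mem_erase.2 ⟨hi'.1.symm, hm⟩) (fun x hx => hmax x (Finset.mem_of_mem_erase hx)),
        Finset.erase_right_comm, Function.update_self]
      have hc : ∀ j, j ≠ m → Function.update a m (a i * a m) j = a j :=
        fun j hj => Function.update_of_ne hj _ _
      congr 1
      · refine Finset.sum_congr rfl fun T hT => ?_
        rw [Finset.mem_powerset] at hT
        have hiT : i ∉ T := fun h => (Finset.mem_erase.1 (hT h)).1 rfl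
        rw [subW_congr W _ a _ (fun j hj => hc j (by grind)),
          Finset.prod_congr rfl (fun j hj => hc j (by grind)),
          Finset.prod_insert hiT, Finset.sdiff_insert, Finset.erase_sdiff_comm]
        congr 3
        ring
      · rw [subW_congr W _ a _ (fun j hj => hc j (by grind))]
    rw [hrec a s m hm hmax, Finset.sum_congr rfl key, Finset.sum_sub_distrib,
      sum_powerset_insert (s.erase m) (fun T => SubW W a ((s.erase m) \ T)
        * TensorAlgebra.ι ℂ (a m * ∏ i ∈ T, a i))]
    simp only [Finset.sdiff_empty, Finset.prod_empty, mul_one]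
    abel
end

/-! ### The partition sum over an arbitrary index set -/

/-- The families of pairwise disjoint nonempty subsets of `s`. Such a family `S` is the set of open
blocks of exactly one incomplete partition of `s` whose closed blocks are singletons: the closed
blocks are the singletons of the points that `S` does not cover. -/
def OpenFam {n : ℕ} (s : Finset (Fin n)) : Finset (Finset (Finset (Fin n))) :=
  Finset.univ.filter fun S =>
    (∀ B ∈ S, B.Nonempty ∧ B ⊆ s) ∧ ∀ B ∈ S, ∀ C ∈ S, ∀ x ∈ B, x ∈ C → B = C

lemma mem_openFam {n : ℕ} {s : Finset (Fin n)} {S : Finset (Finset (Fin n))} :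
    S ∈ OpenFam s ↔
      (∀ B ∈ S, B.Nonempty ∧ B ⊆ s) ∧ ∀ B ∈ S, ∀ C ∈ S, ∀ x ∈ B, x ∈ C → B = C := by
  simp [OpenFam]

lemma card_le_of_mem_openFam {n : ℕ} {s : Finset (Fin n)} {S : Finset (Finset (Fin n))}
    (h : S ∈ OpenFam s) : S.card ≤ s.card := by
  rw [mem_openFam] at h
  have h1 : ∀ B ∈ S, ∃ x, x ∈ B := fun B hB => (h.1 B hB).1
  rcases S.eq_empty_or_nonempty with rfl | ⟨B₀, hB₀⟩
  · simp
  haveI : Nonempty (Fin n) := (h1 B₀ hB₀).nonempty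
  choose! f hf using h1
  refine Finset.card_le_card_of_injOn f (fun B hB => (h.1 B hB).2 (hf B hB)) ?_
  intro B hB C hC hBC
  exact h.2 B hB C hC (f B) (hf B hB) (hBC ▸ hf C hC)

/-- The word `X(a_{V₁}) ⋯ X(a_{Vₘ})`, the blocks of `S` ordered by their largest elements. -/
def blockWord {M : Type*} [CommRing M] [Algebra ℂ M] {n : ℕ} (a : Fin n → M)
    (S : Finset (Finset (Fin n))) : TensorAlgebra ℂ M :=
  ((maxElts S).map fun v => TensorAlgebra.ι ℂ (aProd a (blockOf S v))).prod

/-- The summand of the partition formula over `s` with open blocks `S`. -/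
def ipTerm {M : Type*} [CommRing M] [Algebra ℂ M] (E : M →ₗ[ℂ] ℂ) {n : ℕ} (a : Fin n → M)
    (s : Finset (Fin n)) (S : Finset (Finset (Fin n))) : TensorAlgebra ℂ M :=
  ((-1 : ℂ) ^ (s.card - S.card) * (∏ i ∈ s \ S.biUnion id, E (a i))
    * ∏ V ∈ S, ((V.card - 1).factorial : ℂ)) • blockWord a S

/-- The right-hand side of the partition formula, over the index set `s`. -/
def ipSum {M : Type*} [CommRing M] [Algebra ℂ M] (E : M →ₗ[ℂ] ℂ) {n : ℕ} (a : Fin n → M)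
    (s : Finset (Fin n)) : TensorAlgebra ℂ M :=
  ∑ S ∈ OpenFam s, ipTerm E a s S

lemma aProd_eq_prod {M : Type*} [CommRing M] {n : ℕ} (a : Fin n → M) (B : Finset (Fin n)) :
    aProd a B = ∏ i ∈ B, a i := by
  unfold aProd
  rw [← Finset.prod_map_toList]
  exact ((Finset.sort_perm_toList _ _).map a).prod_eq

section
variable {M : Type*} [CommRing M] [Algebra ℂ M]

/-! ### Splitting the partition sum along the block of the largest index -/

lemma maxElts_insert {n : ℕ} (S : Finset (Finset (Fin n))) (B : Finset (Fin n)) (m : Fin n)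
    (hm : m ∈ B) (hB : ∀ x ∈ B, x ≤ m) (hS : ∀ C ∈ S, ∀ x ∈ C, x < m) :
    maxElts (insert B S) = maxElts S ++ [m] := by
  unfold maxElts
  set F := Finset.univ.filter fun i : Fin n => ∃ C ∈ S, i ∈ C ∧ ∀ x ∈ C, x ≤ i with hF
  have hlt : ∀ x ∈ F, x < m := by
    intro x hx
    obtain ⟨C, hC, hxC, -⟩ := (Finset.mem_filter.1 hx).2
    exact hS C hC x hxC
  have h1 : (Finset.univ.filter fun i : Fin n => ∃ C ∈ insert B S, i ∈ C ∧ ∀ x ∈ C, x ≤ i)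
      = insert m F := by
    ext i
    simp only [hF, Finset.mem_filter, Finset.mem_univ, true_and, Finset.mem_insert,
      exists_eq_or_imp]
    refine or_congr ⟨fun h => le_antisymm (hB _ h.1) (h.2 _ hm), ?_⟩ Iff.rfl
    rintro rfl
    exact ⟨hm, hB⟩
  rw [h1]
  refine List.Perm.eq_of_pairwise' (r := (· ≤ ·)) (Finset.pairwise_sort _ _) ?_ ?_
  · rw [List.pairwise_append]
    refine ⟨Finset.pairwise_sort _ _, List.pairwise_singleton _ _, ?_⟩
    intro x hx y hy
    rw [List.mem_singleton] at hy
    exact hy ▸ (hlt x ((Finset.mem_sort _).1 hx)).le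
  · refine (Finset.sort_perm_toList _ _).trans ?_
    refine (Finset.toList_insert (fun h => (hlt m h).false)).trans ?_
    refine (((Finset.sort_perm_toList F (· ≤ ·)).symm).cons m).trans ?_
    exact (List.perm_append_singleton _ _).symm

lemma blockWord_insert {n : ℕ} (a : Fin n → M) (S : Finset (Finset (Fin n)))
    (B : Finset (Fin n)) (m : Fin n)
    (hm : m ∈ B) (hB : ∀ x ∈ B, x ≤ m) (hS : ∀ C ∈ S, ∀ x ∈ C, x < m)
    (hd : ∀ C ∈ S, ∀ x ∈ C, x ∉ B) :
    blockWord a (insert B S) = blockWord a S * TensorAlgebra.ι ℂ (∏ i ∈ B, a i) := by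
  unfold blockWord
  rw [maxElts_insert S B m hm hB hS, List.map_append, List.prod_append, List.map_singleton,
    List.prod_singleton]
  have h1 : blockOf (insert B S) m = B := by
    ext x
    simp only [blockOf, Finset.mem_filter, Finset.mem_univ, true_and, Finset.mem_insert,
      exists_eq_or_imp]
    refine ⟨?_, fun h => Or.inl ⟨hm, h⟩⟩
    rintro (h | ⟨C, hC, hmC, -⟩)
    · exact h.2
    · exact absurd hm (hd C hC m hmC)
  rw [h1, aProd_eq_prod]
  congr 2
  refine List.map_congr_left fun v hv => ?_
  have hv' : ∃ C ∈ S, v ∈ C := by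
    obtain ⟨C, hC, hvC, -⟩ := (Finset.mem_filter.1 ((Finset.mem_sort _).1 hv)).2
    exact ⟨C, hC, hvC⟩
  obtain ⟨C, hC, hvC⟩ := hv'
  have : blockOf (insert B S) v = blockOf S v := by
    ext x
    simp only [blockOf, Finset.mem_filter, Finset.mem_univ, true_and, Finset.mem_insert,
      exists_eq_or_imp]
    have := hd C hC v hvC
    tauto
  rw [this]

lemma ipSum_empty (E : M →ₗ[ℂ] ℂ) {n : ℕ} (a : Fin n → M) : ipSum E a ∅ = 1 := by
  have h : OpenFam (∅ : Finset (Fin n)) = {∅} := by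
    ext S
    rw [mem_openFam, Finset.mem_singleton]
    constructor
    · intro h
      refine Finset.eq_empty_of_forall_notMem fun B hB => ?_
      obtain ⟨⟨x, hx⟩, h2⟩ := h.1 B hB
      exact absurd (h2 hx) (Finset.notMem_empty x)
    · rintro rfl
      simp
  simp [ipSum, h, ipTerm, blockWord, maxElts]

/-- Contribution of the case in which the largest index `m` is a closed singleton. -/
lemma ipTerm_of_notMem (E : M →ₗ[ℂ] ℂ) {n : ℕ} (a : Fin n → M) (s : Finset (Fin n))
    (m : Fin n) (hm : m ∈ s) (S : Finset (Finset (Fin n))) (hS : S ∈ OpenFam (s.erase m)) :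
    ipTerm E a s S = -(E (a m) • ipTerm E a (s.erase m) S) := by
  have hc := card_le_of_mem_openFam hS
  rw [mem_openFam] at hS
  have hmS : m ∉ S.biUnion id := by
    simp only [Finset.mem_biUnion, id, not_exists, not_and]
    intro B hB hmB
    exact (Finset.mem_erase.1 ((hS.1 B hB).2 hmB)).1 rfl
  have hs : s \ S.biUnion id = insert m (s.erase m \ S.biUnion id) := by
    rw [← Finset.insert_sdiff_of_notMem _ hmS, Finset.insert_erase hm]
  have hcard : s.card - S.card = ((s.erase m).card - S.card) + 1 := by
    rw [← Finset.card_erase_add_one hm]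
    omega
  unfold ipTerm
  rw [smul_smul, ← neg_smul, hs, Finset.prod_insert (by simp), hcard, pow_succ]
  congr 1
  ring

/-- Contribution of the case in which the largest index `m` lies in the open block `T ∪ {m}`. This
block has `|T|!` as its weight, and its letter comes last in the word. -/
lemma ipTerm_insert (E : M →ₗ[ℂ] ℂ) {n : ℕ} (a : Fin n → M) (s : Finset (Fin n))
    (m : Fin n) (hm : m ∈ s) (hmax : ∀ x ∈ s, x ≤ m) (T : Finset (Fin n)) (hT : T ⊆ s.erase m)
    (S : Finset (Finset (Fin n))) (hS : S ∈ OpenFam (s.erase m \ T)) :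
    ipTerm E a s (insert (insert m T) S)
      = ((-1 : ℂ) ^ T.card * (T.card.factorial : ℂ)) •
        (ipTerm E a (s.erase m \ T) S * TensorAlgebra.ι ℂ (a m * ∏ i ∈ T, a i)) := by
  have hc := card_le_of_mem_openFam hS
  rw [mem_openFam] at hS
  have hmT : m ∉ T := fun h => (Finset.mem_erase.1 (hT h)).1 rfl
  have hmem : ∀ C ∈ S, ∀ x ∈ C, x ∈ s ∧ x ≠ m ∧ x ∉ T := by
    intro C hC x hx
    have := (hS.1 C hC).2 hx
    simp only [Finset.mem_sdiff, Finset.mem_erase] at this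
    tauto
  have hnew : insert m T ∉ S := fun h => (hmem _ h m (Finset.mem_insert_self _ _)).2.1 rfl
  have hw := blockWord_insert a S (insert m T) m (Finset.mem_insert_self _ _)
    (by
      intro x hx
      rcases Finset.mem_insert.1 hx with rfl | hx
      · exact le_rfl
      · exact hmax x (Finset.mem_of_mem_erase (hT hx)))
    (fun C hC x hx => lt_of_le_of_ne (hmax x (hmem C hC x hx).1) (hmem C hC x hx).2.1)
    (fun C hC x hx => by
      have := hmem C hC x hx
      simp only [Finset.mem_insert]
      tauto)
  have hs : s \ (insert (insert m T) S).biUnion id = (s.erase m \ T) \ S.biUnion id := by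
    rw [Finset.biUnion_insert]
    ext x
    simp only [Finset.mem_sdiff, Finset.mem_union, Finset.mem_erase, id, Finset.mem_insert]
    tauto
  have hcard : s.card - (insert (insert m T) S).card
      = ((s.erase m \ T).card - S.card) + T.card := by
    rw [Finset.card_insert_of_notMem hnew, ← Finset.card_erase_add_one hm]
    have := Finset.card_sdiff_add_card_eq_card hT
    omega
  unfold ipTerm
  rw [hw, Finset.prod_insert hmT, hs, hcard, Finset.prod_insert hnew,
    Finset.card_insert_of_notMem hmT, smul_mul_assoc, smul_smul, pow_add, Nat.add_sub_cancel]
  congr 1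
  ring

/-- The recursion of `subW_unroll`, for the partition sum. -/
lemma ipSum_unroll (E : M →ₗ[ℂ] ℂ) {n : ℕ} (a : Fin n → M) (s : Finset (Fin n))
    (m : Fin n) (hm : m ∈ s) (hmax : ∀ x ∈ s, x ≤ m) :
    ipSum E a s = ∑ T ∈ (s.erase m).powerset, ((-1 : ℂ) ^ T.card * (T.card.factorial : ℂ)) •
        (ipSum E a ((s.erase m) \ T) * TensorAlgebra.ι ℂ (a m * ∏ i ∈ T, a i))
      - E (a m) • ipSum E a (s.erase m) := by
  have hA : ∑ S ∈ (OpenFam s).filter (fun S => ¬ ∃ B ∈ S, m ∈ B), ipTerm E a s S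
      = -(E (a m) • ipSum E a (s.erase m)) := by
    rw [ipSum, Finset.smul_sum, ← Finset.sum_neg_distrib]
    refine Finset.sum_congr ?_ fun S hS => ipTerm_of_notMem E a s m hm S hS
    ext S
    simp only [Finset.mem_filter, mem_openFam]
    constructor
    · rintro ⟨⟨h1, h2⟩, h3⟩
      refine ⟨fun B hB => ⟨(h1 B hB).1, fun x hx => Finset.mem_erase.2 ⟨?_, (h1 B hB).2 hx⟩⟩, h2⟩
      rintro rfl
      exact h3 ⟨B, hB, hx⟩
    · rintro ⟨h1, h2⟩
      refine ⟨⟨fun B hB => ⟨(h1 B hB).1, (h1 B hB).2.trans (Finset.erase_subset _ _)⟩, h2⟩, ?_⟩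
      rintro ⟨B, hB, hmB⟩
      exact (Finset.mem_erase.1 ((h1 B hB).2 hmB)).1 rfl
  have hB : ∑ S ∈ (OpenFam s).filter (fun S => ∃ B ∈ S, m ∈ B), ipTerm E a s S
      = ∑ T ∈ (s.erase m).powerset, ((-1 : ℂ) ^ T.card * (T.card.factorial : ℂ)) •
        (ipSum E a ((s.erase m) \ T) * TensorAlgebra.ι ℂ (a m * ∏ i ∈ T, a i)) := by
    simp only [ipSum, Finset.sum_mul, Finset.smul_sum]
    rw [Finset.sum_sigma']
    symm
    refine Finset.sum_bij (fun p _ => insert (insert m p.1) p.2) ?_ ?_ ?_ ?_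
    · rintro ⟨T, S⟩ h
      simp only [Finset.mem_sigma, Finset.mem_powerset, mem_openFam, Finset.mem_filter] at h ⊢
      obtain ⟨hT, h1, h2⟩ := h
      have hd : ∀ C ∈ S, ∀ x ∈ C, x ∉ insert m T := by
        intro C hC x hx hx'
        have := (h1 C hC).2 hx
        simp only [Finset.mem_sdiff, Finset.mem_erase, Finset.mem_insert] at this hx'
        tauto
      refine ⟨⟨?_, ?_⟩, insert m T, Finset.mem_insert_self _ _, Finset.mem_insert_self _ _⟩
      · intro B hB
        rcases Finset.mem_insert.1 hB with rfl | hB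
        · exact ⟨Finset.insert_nonempty _ _,
            Finset.insert_subset hm (hT.trans (Finset.erase_subset _ _))⟩
        · exact ⟨(h1 B hB).1, (h1 B hB).2.trans
            (Finset.sdiff_subset.trans (Finset.erase_subset _ _))⟩
      · intro B hB C hC x hxB hxC
        rcases Finset.mem_insert.1 hB with rfl | hB <;> rcases Finset.mem_insert.1 hC with rfl | hC
        · rfl
        · exact absurd hxB (hd C hC x hxC)
        · exact absurd hxC (hd B hB x hxB)
        · exact h2 B hB C hC x hxB hxC
    · rintro ⟨T, S⟩ h ⟨T', S'⟩ h' heq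
      simp only [Finset.mem_sigma, Finset.mem_powerset, mem_openFam] at h h' heq
      have hn : ∀ C ∈ S, m ∉ C := fun C hC hx => by simpa using (h.2.1 C hC).2 hx
      have hn' : ∀ C ∈ S', m ∉ C := fun C hC hx => by simpa using (h'.2.1 C hC).2 hx
      have hmT : m ∉ T := fun hx => by simpa using h.1 hx
      have hmT' : m ∉ T' := fun hx => by simpa using h'.1 hx
      have hTT : insert m T = insert m T' := by
        have : insert m T ∈ insert (insert m T') S' := heq ▸ Finset.mem_insert_self _ _
        rcases Finset.mem_insert.1 this with h3 | h3
        · exact h3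
        · exact absurd (Finset.mem_insert_self _ _) (hn' _ h3)
      have hT : T = T' := by
        rw [← Finset.erase_insert hmT, hTT, Finset.erase_insert hmT']
      subst hT
      have hS : S = S' := by
        rw [← Finset.erase_insert (fun h3 => hn _ h3 (Finset.mem_insert_self _ _) :
          insert m T ∉ S), heq,
          Finset.erase_insert (fun h3 => hn' _ h3 (Finset.mem_insert_self _ _))]
      subst hS
      rfl
    · intro S hS
      simp only [mem_openFam, Finset.mem_filter] at hS
      obtain ⟨⟨h1, h2⟩, B, hB, hmB⟩ := hS
      refine ⟨⟨B.erase m, S.erase B⟩, ?_, ?_⟩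
      · simp only [Finset.mem_sigma, Finset.mem_powerset, mem_openFam]
        refine ⟨Finset.erase_subset_erase _ (h1 B hB).2, fun C hC => ?_, fun C hC D hD =>
          h2 C (Finset.mem_of_mem_erase hC) D (Finset.mem_of_mem_erase hD)⟩
        have hC' := Finset.mem_erase.1 hC
        refine ⟨(h1 C hC'.2).1, fun x hx => ?_⟩
        have hxB : x ∉ B := fun h => hC'.1 (h2 C hC'.2 B hB x hx h)
        have hxm : x ≠ m := fun h => hxB (h ▸ hmB)
        simp [hxB, hxm, (h1 C hC'.2).2 hx]
      · simp only [Finset.insert_erase hmB, Finset.insert_erase hB]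
    · rintro ⟨T, S⟩ h
      simp only [Finset.mem_sigma, Finset.mem_powerset] at h
      exact (ipTerm_insert E a s m hm hmax T h.1 S h.2).symm
  rw [ipSum, ← Finset.sum_filter_add_sum_filter_not _ (fun S => ∃ B ∈ S, m ∈ B), hA, hB,
    sub_eq_add_neg]

/-! ### Comparison -/

/-- The bijection `(π, S) ↦ S` turns the sum over incomplete partitions into `ipSum`. -/
lemma sum_partitions_eq_ipSum (E : M →ₗ[ℂ] ℂ) {n : ℕ} (a : Fin n → M) :
    (∑ π ∈ Finset.univ.filter (fun π : Finset (Finset (Fin n)) => IsPartition π),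
      ∑ S ∈ π.powerset.filter (fun S => ∀ U ∈ π, U ∉ S → U.card = 1),
        ((-1 : ℂ) ^ (n - S.card)
            * (∏ U ∈ π \ S, E (aProd a U))
            * ∏ V ∈ S, ((V.card - 1).factorial : ℂ)) •
          ((maxElts S).map fun v =>
            TensorAlgebra.ι ℂ (aProd a (blockOf S v))).prod)
      = ipSum E a Finset.univ := by
  -- The closed blocks are the singletons of the uncovered points, so `S` determines `π`.
  have hdiff : ∀ π S : Finset (Finset (Fin n)), IsPartition π → S ⊆ π →
      (∀ U ∈ π, U ∉ S → U.card = 1) →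
      π \ S = (Finset.univ \ S.biUnion id).image (fun i => {i}) := by
    intro π S hπ hS h1
    ext U
    simp only [Finset.mem_sdiff, Finset.mem_image, Finset.mem_biUnion, id, Finset.mem_univ,
      true_and]
    constructor
    · rintro ⟨hU, hUS⟩
      obtain ⟨i, rfl⟩ := Finset.card_eq_one.1 (h1 U hU hUS)
      refine ⟨i, ?_, rfl⟩
      rintro ⟨B, hB, hiB⟩
      have := (hπ.2 i).unique ⟨hS hB, hiB⟩ ⟨hU, Finset.mem_singleton_self i⟩
      exact hUS (this ▸ hB)
    · rintro ⟨i, hi, rfl⟩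
      obtain ⟨B, ⟨hB, hiB⟩, -⟩ := hπ.2 i
      have hBS : B ∉ S := fun h => hi ⟨B, h, hiB⟩
      obtain ⟨j, rfl⟩ := Finset.card_eq_one.1 (h1 B hB hBS)
      obtain rfl := Finset.mem_singleton.1 hiB
      exact ⟨hB, hBS⟩
  rw [ipSum, Finset.sum_sigma']
  refine Finset.sum_bij (fun p _ => p.2) ?_ ?_ ?_ ?_
  · rintro ⟨π, S⟩ h
    simp only [Finset.mem_sigma, Finset.mem_filter, Finset.mem_univ, true_and,
      Finset.mem_powerset] at h
    obtain ⟨hπ, hS, -⟩ := h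
    rw [mem_openFam]
    exact ⟨fun B hB => ⟨hπ.1 B (hS hB), Finset.subset_univ _⟩,
      fun B hB C hC x hxB hxC => (hπ.2 x).unique ⟨hS hB, hxB⟩ ⟨hS hC, hxC⟩⟩
  · rintro ⟨π, S⟩ h ⟨π', S'⟩ h' heq
    simp only [Finset.mem_sigma, Finset.mem_filter, Finset.mem_univ, true_and,
      Finset.mem_powerset] at h h' heq
    subst heq
    have : π = π' := by
      rw [← Finset.sdiff_union_of_subset h.2.1, hdiff π S h.1 h.2.1 h.2.2,
        ← hdiff π' S h'.1 h'.2.1 h'.2.2, Finset.sdiff_union_of_subset h'.2.1]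
    rw [this]
  · intro S hS
    rw [mem_openFam] at hS
    obtain ⟨h1, h2⟩ := hS
    refine ⟨⟨S ∪ (Finset.univ \ S.biUnion id).image (fun i => {i}), S⟩, ?_, rfl⟩
    simp only [Finset.mem_sigma, Finset.mem_filter, Finset.mem_univ, true_and,
      Finset.mem_powerset]
    refine ⟨⟨?_, ?_⟩, Finset.subset_union_left, ?_⟩
    · intro B hB
      rcases Finset.mem_union.1 hB with hB | hB
      · exact (h1 B hB).1
      · obtain ⟨i, -, rfl⟩ := Finset.mem_image.1 hB
        exact Finset.singleton_nonempty i
    · intro i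
      by_cases hi : ∃ B ∈ S, i ∈ B
      · obtain ⟨B, hB, hiB⟩ := hi
        refine ⟨B, ⟨Finset.mem_union_left _ hB, hiB⟩, ?_⟩
        rintro C ⟨hC, hiC⟩
        rcases Finset.mem_union.1 hC with hC | hC
        · exact h2 C hC B hB i hiC hiB
        · obtain ⟨j, hj, rfl⟩ := Finset.mem_image.1 hC
          obtain rfl := Finset.mem_singleton.1 hiC
          exact absurd (Finset.mem_biUnion.2 ⟨B, hB, hiB⟩) (Finset.mem_sdiff.1 hj).2
      · refine ⟨{i}, ⟨Finset.mem_union_right _ (Finset.mem_image.2 ⟨i, ?_, rfl⟩),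
          Finset.mem_singleton_self i⟩, ?_⟩
        · simpa using hi
        · rintro C ⟨hC, hiC⟩
          rcases Finset.mem_union.1 hC with hC | hC
          · exact absurd ⟨C, hC, hiC⟩ hi
          · obtain ⟨j, hj, rfl⟩ := Finset.mem_image.1 hC
            rw [Finset.mem_singleton.1 hiC]
    · intro U hU hUS
      rcases Finset.mem_union.1 hU with hU | hU
      · exact absurd hU hUS
      · obtain ⟨i, -, rfl⟩ := Finset.mem_image.1 hU
        exact Finset.card_singleton i
  · rintro ⟨π, S⟩ h
    simp only [Finset.mem_sigma, Finset.mem_filter, Finset.mem_univ, true_and,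
      Finset.mem_powerset] at h
    simp only [ipTerm, blockWord, Finset.card_univ, Fintype.card_fin]
    rw [hdiff π S h.1 h.2.1 h.2.2,
      Finset.prod_image (fun i _ j _ hij => Finset.singleton_injective hij)]
    simp only [aProd_eq_prod, Finset.prod_singleton]

lemma subW_eq_ipSum (E : M →ₗ[ℂ] ℂ)
    (W : (m : ℕ) → (Fin m → M) → TensorAlgebra ℂ M)
    (hW0 : ∀ a : Fin 0 → M, W 0 a = 1) {n : ℕ}
    (hrec : ∀ (a : Fin n → M) (s : Finset (Fin n)) (m : Fin n), m ∈ s → (∀ x ∈ s, x ≤ m) →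
      SubW W a s = ∑ T ∈ (s.erase m).powerset, ((-1 : ℂ) ^ T.card * (T.card.factorial : ℂ)) •
          (SubW W a ((s.erase m) \ T) * TensorAlgebra.ι ℂ (a m * ∏ i ∈ T, a i))
        - E (a m) • SubW W a (s.erase m))
    (a : Fin n → M) (s : Finset (Fin n)) : SubW W a s = ipSum E a s := by
  induction s using Finset.strongInduction with
  | H s ih =>
    rcases s.eq_empty_or_nonempty with rfl | hs
    · rw [ipSum_empty]
      exact hW0 _
    · have hm := s.max'_mem hs
      have hlt := Finset.erase_ssubset hm
      rw [hrec a s _ hm (fun x hx => s.le_max' x hx),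
        ipSum_unroll E a s _ hm (fun x hx => s.le_max' x hx), ih _ hlt]
      congr 1
      refine Finset.sum_congr rfl fun T _ => ?_
      rw [ih _ (Finset.sdiff_subset.trans_ssubset hlt)]
end

theorem stmt11 {M : Type*} [CommRing M] [Algebra ℂ M] (E : M →ₗ[ℂ] ℂ)
    (W : (m : ℕ) → (Fin m → M) → TensorAlgebra ℂ M)
    (hW0 : ∀ a : Fin 0 → M, W 0 a = 1)
    (hW1 : ∀ a : Fin 1 → M,
      W 1 a = W 0 (Fin.init a) * TensorAlgebra.ι ℂ (a 0)
        - E (a 0) • W 0 (Fin.init a))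
    (hWrec : ∀ (m : ℕ) (a : Fin (m + 2) → M),
      W (m + 2) a =
        W (m + 1) (Fin.init a) * TensorAlgebra.ι ℂ (a (Fin.last (m + 1)))
          - E (a (Fin.last (m + 1))) • W (m + 1) (Fin.init a)
          - ∑ i : Fin (m + 1),
              W (m + 1) (Fin.snoc (i.removeNth (Fin.init a))
                (a i.castSucc * a (Fin.last (m + 1))))
          - ∑ i : Fin (m + 1),
              E (a i.castSucc * a (Fin.last (m + 1))) • W m (i.removeNth (Fin.init a)))
    (n : ℕ) (a : Fin n → M) :
    W n a
      = ∑ π ∈ Finset.univ.filter (fun π : Finset (Finset (Fin n)) => IsPartition π),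
          ∑ S ∈ π.powerset.filter (fun S => ∀ U ∈ π, U ∉ S → U.card = 1),
            ((-1 : ℂ) ^ (n - S.card)
                * (∏ U ∈ π \ S, E (aProd a U))
                * ∏ V ∈ S, ((V.card - 1).factorial : ℂ)) •
              ((maxElts S).map fun v =>
                TensorAlgebra.ι ℂ (aProd a (blockOf S v))).prod := by

  rw [sum_partitions_eq_ipSum, ← subW_eq_ipSum E W hW0
    (fun a s m hm hmax => subW_unroll E W
      (fun a s m hm hmax => subW_rec E W hW1 hWrec a s m hm hmax) m _ a s rfl hm hmax) a]
  exact (subW_eq W a Finset.univ (by simp) id strictMono_id (fun _ => Finset.mem_univ _)).symm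
end
end
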